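/- Let α, β ≥ 2 be integers satisfying α² − 125β² = 4 and α + β ≡ 0 (mod 25), and set d = (α+β)² − 4 and ε₂ = (α + 125β + 5·√(5d))/2 ∈ ℝ. Then ε₂ is not a fifth power in the real quadratic field k₂ = ℚ(√(5d)): there is no element x of the subfield of ℝ generated over ℚ by √(5d) such that x⁵ = ε₂. -/

import Mathlib

/-! Put `T = α + 125β`, so that `ε₂ + ε₂⁻¹ = T`. If `ε₂ = x ^ 5` with `x ∈ k₂`, then `x` is a unit
of norm `1` whose trace `t` is an integer with `D₅(t) = T`, where `D₅` is the Dickson polynomial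
determined by `D₅(x + x⁻¹) = x⁵ + x⁻⁵`. A congruence excludes this.

The equation `α² - 5(5β)² = 4` gives `5β = F_{2k}` and `α = L_{2k} = 2 F_{2k+1} - F_{2k}` for
Fibonacci and Lucas numbers. Modulo any divisor of `F₁₂₅`, the sequence `n ↦ F_n` changes sign under
`n ↦ n + 250`. As `125 ∣ F₁₂₅`, the condition `25 ∣ α + β` becomes one on `k` modulo `125`, with the
single solution `k ≡ 35`. Hence `T` is known up to sign modulo the large prime factor `P` of `F₁₂₅`.
There `T = ±(y + y⁻¹)` with `y ^ ((P - 1) / 5) ≠ 1`, so that `±y` is not a fifth power, and this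
prevents `T` from being a value of `D₅` modulo `P`. -/

section Fibonacci

theorem exists_fib_of_sq_eq {u y : ℕ} (h : u ^ 2 = u * y + y ^ 2 + 1) :
    ∃ k, u = Nat.fib (2 * k + 1) ∧ y = Nat.fib (2 * k) := by
  induction y using Nat.strong_induction_on generalizing u with
  | _ y ih =>
  obtain rfl | hy := y.eq_zero_or_pos
  · exact ⟨0, by simpa using h, by simp⟩
  obtain ⟨v, rfl⟩ : ∃ v, u = y + v := Nat.exists_eq_add_of_le (by nlinarith)
  obtain ⟨w, rfl⟩ : ∃ w, y = v + w := Nat.exists_eq_add_of_le (by nlinarith)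
  obtain ⟨k, rfl, rfl⟩ := ih w (by nlinarith) (u := v) (by linarith)
  refine ⟨k + 1, ?_, ?_⟩ <;> simp only [mul_add, mul_one, Nat.fib_add_two] <;> ring

theorem exists_fib_of_sq_sub_five_mul_sq {x y : ℤ} (hx : 0 ≤ x) (hy : 0 ≤ y)
    (h : x ^ 2 - 5 * y ^ 2 = 4) :
    ∃ k, x = 2 * Nat.fib (2 * k + 1) - Nat.fib (2 * k) ∧ y = Nat.fib (2 * k) := by
  have hpar : Even (x + y) := by
    have : Even (x ^ 2 - 5 * y ^ 2) := h ▸ by decide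
    simpa [parity_simps, show ¬ Even (5 : ℤ) by decide] using this
  obtain ⟨u, hu⟩ := hpar
  obtain rfl : x = 2 * u - y := by linarith
  lift y to ℕ using hy
  lift u to ℕ using by linarith
  obtain ⟨k, rfl, rfl⟩ := exists_fib_of_sq_eq (u := u) (y := y) (by zify; linarith)
  exact ⟨k, rfl, rfl⟩

variable {R : Type*} [CommRing R] {m : ℕ}

theorem cast_fib_succ_sq (hm : Odd m) (h0 : (Nat.fib m : R) = 0) :
    (Nat.fib (m + 1) : R) ^ 2 = -1 := by
  have cassini (n : ℕ) : (Nat.fib (n + 1) ^ 2 - Nat.fib (n + 1) * Nat.fib n - Nat.fib n ^ 2 : R) =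
      (-1) ^ n := by
    induction n with
    | zero => simp
    | succ n ih =>
      rw [pow_succ (-1 : R), ← ih, Nat.fib_add_two, Nat.cast_add]
      ring
  simpa [h0, hm.neg_one_pow] using cassini m

theorem cast_fib_add_two_mul (hm : Odd m) (h0 : (Nat.fib m : R) = 0) (n : ℕ) :
    (Nat.fib (n + 2 * m) : R) = -Nat.fib n := by
  have hshift (n : ℕ) : (Nat.fib (n + m) : R) = Nat.fib n * Nat.fib (m + 1) := by
    cases n with
    | zero => simp [h0]
    | succ n => simp [Nat.add_right_comm n 1 m, Nat.fib_add n m, h0]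
  rw [two_mul, ← add_assoc, hshift, hshift, mul_assoc, ← sq, cast_fib_succ_sq hm h0, mul_neg_one]

theorem cast_fib_add_mul_two_mul (hm : Odd m) (h0 : (Nat.fib m : R) = 0) (n q : ℕ) :
    (Nat.fib (n + q * (2 * m)) : R) = (-1) ^ q * Nat.fib n := by
  induction q with
  | zero => simp
  | succ q ih => rw [add_one_mul, ← add_assoc, cast_fib_add_two_mul hm h0, ih]; ring

theorem cast_fib_two_mul_eq_mod_or_neg (hm : Odd m) (h0 : (Nat.fib m : R) = 0) (k : ℕ) :
    ((Nat.fib (2 * k) : R) = Nat.fib (2 * (k % m)) ∧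
        (Nat.fib (2 * k + 1) : R) = Nat.fib (2 * (k % m) + 1)) ∨
      ((Nat.fib (2 * k) : R) = -Nat.fib (2 * (k % m)) ∧
        (Nat.fib (2 * k + 1) : R) = -Nat.fib (2 * (k % m) + 1)) := by
  have hmod (n : ℕ) :
      (Nat.fib (2 * k + n) : R) = (-1) ^ (k / m) * Nat.fib (2 * (k % m) + n) := by
    rw [← cast_fib_add_mul_two_mul hm h0]
    congr 2
    conv_lhs => rw [← Nat.mod_add_div k m]
    ring
  refine (neg_one_pow_eq_or R (k / m)).imp ?_ ?_ <;> intro h <;>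
    exact ⟨by simpa [h] using hmod 0, by simpa [h] using hmod 1⟩

theorem mod_125_eq_of_five_mul_fib_eq {k : ℕ}
    (h : (5 * Nat.fib (2 * k + 1) : ZMod 125) = 2 * Nat.fib (2 * k)) : k % 125 = 35 := by
  have h0 : (Nat.fib 125 : ZMod 125) = 0 := by decide +kernel
  have hres : ∀ r < 125,
      (5 * Nat.fib (2 * r + 1) : ZMod 125) = 2 * Nat.fib (2 * r) → r = 35 := by
    decide +kernel
  refine hres _ (Nat.mod_lt k (by norm_num)) ?_
  obtain ⟨hk, hk'⟩ | ⟨hk, hk'⟩ := cast_fib_two_mul_eq_mod_or_neg (by decide) h0 k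
  · simpa only [hk, hk'] using h
  · simpa only [hk, hk', mul_neg, neg_inj] using h

end Fibonacci

open Polynomial

section Dickson

theorem dickson_one_one_eval_map {R S : Type*} [CommRing R] [CommRing S] (f : R →+* S) (n : ℕ)
    (t : R) : (dickson 1 1 n).eval (f t) = f ((dickson 1 1 n).eval t) := by
  rw [← eval_map_apply, map_dickson, map_one]

variable {K : Type*} [Field K]

theorem eq_or_eq_inv_of_add_inv_eq_add_inv {x y : K} (hx : x ≠ 0) (hy : y ≠ 0)
    (h : x + x⁻¹ = y + y⁻¹) : x = y ∨ x = y⁻¹ := by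
  have hfac : (x - y) * (x - y⁻¹) = 0 := by
    field_simp at h ⊢
    linear_combination h
  simpa only [mul_eq_zero, sub_eq_zero] using hfac

theorem exists_add_inv_eq [IsAlgClosed K] (t : K) : ∃ x : K, x ≠ 0 ∧ x + x⁻¹ = t := by
  have hdeg : (X ^ 2 - C t * X + 1 : K[X]).degree = 2 := by compute_degree!
  obtain ⟨x, hx⟩ := IsAlgClosed.exists_root (X ^ 2 - C t * X + 1 : K[X]) (by simp [hdeg])
  replace hx : x ^ 2 - t * x + 1 = 0 := by simpa using hx
  have hx0 : x ≠ 0 := by rintro rfl; simp at hx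
  exact ⟨x, hx0, by field_simp; linear_combination hx⟩

theorem exists_pow_eq_of_dickson_eval_eq [IsAlgClosed K] {m : ℕ} {t y : K} (hy : y ≠ 0)
    (h : (dickson 1 1 m).eval t = y + y⁻¹) : ∃ x : K, x ≠ 0 ∧ x + x⁻¹ = t ∧ x ^ m = y := by
  obtain ⟨x, hx0, rfl⟩ := exists_add_inv_eq t
  rw [dickson_one_one_eval_add_inv x x⁻¹ (mul_inv_cancel₀ hx0), inv_pow] at h
  obtain hxy | hxy := eq_or_eq_inv_of_add_inv_eq_add_inv (pow_ne_zero m hx0) hy h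
  · exact ⟨x, hx0, rfl, hxy⟩
  · exact ⟨x⁻¹, inv_ne_zero hx0, by rw [inv_inv, add_comm], by rw [inv_pow, hxy, inv_inv]⟩

theorem pow_eq_one_of_dickson_eval_eq [Fintype K] {m n : ℕ}
    (hmn : m * n = Fintype.card K - 1) {t y : K} (hy : y ≠ 0) (hne : y ≠ y⁻¹)
    (h : (dickson 1 1 m).eval t = y + y⁻¹) : y ^ n = 1 := by
  -- Frobenius fixes `t`, so it maps `x` to `x`, and then `x ∈ K`, or to `x⁻¹`, and then it maps
  -- `y = x ^ m` to `y⁻¹`, although `y ∈ K`.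
  let L := AlgebraicClosure K
  obtain ⟨x, hx0, hxt, hxy⟩ :
      ∃ x : L, x ≠ 0 ∧ x + x⁻¹ = algebraMap K L t ∧ x ^ m = algebraMap K L y :=
    exists_pow_eq_of_dickson_eval_eq (by simpa using hy) (by rw [dickson_one_one_eval_map, h]; simp)
  let φ := FiniteField.frobeniusAlgHom K L
  have hφ : φ x = x ∨ φ x = x⁻¹ := by
    refine eq_or_eq_inv_of_add_inv_eq_add_inv (by simpa using hx0) hx0 ?_
    rw [← map_inv₀, ← map_add, hxt, φ.commutes]
  obtain hφ | hφ := hφ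
  · have hcard : x ^ (Fintype.card K - 1) = 1 := by
      refine mul_right_cancel₀ hx0 ?_
      rw [one_mul, pow_sub_one_mul Fintype.card_ne_zero]
      exact hφ
    apply (algebraMap K L).injective
    rw [map_pow, ← hxy, ← pow_mul, hmn, hcard, map_one]
  · have hinv : algebraMap K L y = algebraMap K L y⁻¹ :=
      calc algebraMap K L y = φ (algebraMap K L y) := (φ.commutes y).symm
        _ = (algebraMap K L y)⁻¹ := by rw [← hxy, map_pow, hφ, inv_pow]
        _ = algebraMap K L y⁻¹ := (map_inv₀ _ y).symm
    exact absurd ((algebraMap K L).injective hinv) hne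

end Dickson

section QuadraticExtension

theorem sq_sub_trace_mul_add_norm {R S : Type*} [CommRing R] [Nontrivial R] [CommRing S]
    [Algebra R S] [Algebra.IsQuadraticExtension R S] (x : S) :
    x ^ 2 - algebraMap R S (Algebra.trace R S x) * x + algebraMap R S (Algebra.norm R x) = 0 := by
  let b := Module.finBasisOfFinrankEq R S (Algebra.IsQuadraticExtension.finrank_eq_two R S)
  have h := Matrix.aeval_self_charpoly (Algebra.leftMulMatrix b x)
  rw [aeval_algHom_apply, map_eq_zero_iff _ (Algebra.leftMulMatrix_injective b),
    Matrix.charpoly_fin_two, ← Algebra.trace_eq_matrix_trace, ← Algebra.norm_eq_matrix_det] at h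
  simpa using h

section Field

variable {F K : Type*} [Field F] [Field K] [Algebra F K]

theorem norm_eq_one_of_add_inv_eq [Algebra.IsQuadraticExtension F K] {x : K} {T : F}
    (hx : x ∉ Set.range (algebraMap F K)) (h : x + x⁻¹ = algebraMap F K T) :
    Algebra.norm F x = 1 := by
  have hx0 : x ≠ 0 := by rintro rfl; exact hx ⟨0, map_zero _⟩
  have hlin : algebraMap F K (T - Algebra.trace F K x) * x =
      algebraMap F K (1 - Algebra.norm F x) := by
    rw [map_sub, map_sub, map_one, ← h]
    field_simp
    linear_combination sq_sub_trace_mul_add_norm (R := F) x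
  have htr : T - Algebra.trace F K x = 0 := by
    by_contra h0
    refine hx ⟨(1 - Algebra.norm F x) / (T - Algebra.trace F K x), ?_⟩
    rw [map_div₀, ← hlin, mul_div_cancel_left₀ _ ((_root_.map_ne_zero _).mpr h0)]
  rw [htr, map_zero, zero_mul, eq_comm, map_eq_zero, sub_eq_zero] at hlin
  exact hlin.symm

theorem add_inv_eq_trace [Algebra.IsQuadraticExtension F K] {x : K} (h : Algebra.norm F x = 1) :
    x + x⁻¹ = algebraMap F K (Algebra.trace F K x) := by
  have hx0 : x ≠ 0 := by rintro rfl; simp at h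
  have hquad := sq_sub_trace_mul_add_norm (R := F) x
  rw [h, map_one] at hquad
  field_simp
  linear_combination hquad

theorem isIntegral_of_add_inv_eq {R : Type*} [CommRing R] [Algebra R K] {x : K} {a : R}
    (h : x + x⁻¹ = algebraMap R K a) : IsIntegral R x := by
  nontriviality R
  obtain rfl | hx0 := eq_or_ne x 0
  · exact isIntegral_zero
  refine ⟨X ^ 2 - C a * X + 1, by monicity!, ?_⟩
  have heval : aeval x (X ^ 2 - C a * X + 1) = x ^ 2 - algebraMap R K a * x + 1 := by simp
  rw [← aeval_def, heval, ← h]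
  field_simp
  ring

open scoped IntermediateField in
theorem isQuadraticExtension_adjoin_simple {s : K} {D : F} (hs : s ^ 2 = algebraMap F K D)
    (hirr : s ∉ Set.range (algebraMap F K)) : Algebra.IsQuadraticExtension F F⟮s⟯ := by
  have hroot : aeval s (X ^ 2 - C D) = 0 := by simp [hs]
  have hmonic : (X ^ 2 - C D).Monic := monic_X_pow_sub_C D two_ne_zero
  have hint : IsIntegral F s := ⟨_, hmonic, hroot⟩
  refine ⟨?_⟩
  rw [IntermediateField.adjoin.finrank hint]
  refine le_antisymm ?_ ((minpoly.two_le_natDegree_iff hint).mpr hirr)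
  exact (natDegree_le_of_dvd (minpoly.dvd F s hroot) hmonic.ne_zero).trans_eq natDegree_X_pow_sub_C

end Field

theorem exists_dickson_eval_eq_of_pow_add_inv_eq {K : Type*} [Field K] [Algebra ℚ K]
    [Algebra.IsQuadraticExtension ℚ K] {m : ℕ} (hm : Odd m) {x : K} {T : ℤ}
    (hx : x ^ m ∉ Set.range (algebraMap ℚ K)) (hT : x ^ m + (x ^ m)⁻¹ = T) :
    ∃ t : ℤ, (dickson 1 1 m).eval t = T := by
  have : CharZero K := algebraRat.charZero K
  have hx0 : x ≠ 0 := by rintro rfl; exact hx ⟨0, by simp [hm.pos.ne']⟩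
  have hnorm : Algebra.norm ℚ x = 1 := by
    have h := norm_eq_one_of_add_inv_eq (T := (T : ℚ)) hx (by simpa using hT)
    rw [map_pow] at h
    exact hm.strictMono_pow.injective (by simpa using h)
  have hint : IsIntegral ℤ x := .of_pow hm.pos (isIntegral_of_add_inv_eq (a := T) hT)
  obtain ⟨t, ht⟩ := IsIntegrallyClosed.isIntegral_iff.mp (Algebra.isIntegral_trace (L := ℚ) hint)
  refine ⟨t, Int.cast_injective (α := K) ?_⟩
  have htx : (t : K) = x + x⁻¹ := by rw [add_inv_eq_trace hnorm, ← ht]; simp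
  rw [← hT, ← inv_pow, ← dickson_one_one_eval_add_inv x x⁻¹ (mul_inv_cancel₀ hx0), ← htx]
  exact (dickson_one_one_eval_map (Int.castRingHom K) m t).symm

open scoped IntermediateField in
theorem exists_dickson_eval_eq_of_pow_eq {E : Type*} [Field E] [Algebra ℚ E] {s : E} {D c : ℚ}
    (hs : s ^ 2 = algebraMap ℚ E D) (hirr : s ∉ Set.range (algebraMap ℚ E)) (hc : c ≠ 0) {T : ℤ}
    (hT : T ^ 2 - c ^ 2 * D = 4) {m : ℕ} (hm : Odd m) {x : ℚ⟮s⟯}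
    (hx : (x : E) ^ m = (T + algebraMap ℚ E c * s) / 2) :
    ∃ t : ℤ, (dickson 1 1 m).eval t = T := by
  have : CharZero E := algebraRat.charZero E
  -- Instance search would otherwise prefer `DivisionRing.toRatAlgebra`.
  let _ : Algebra ℚ ℚ⟮s⟯ := ℚ⟮s⟯.algebra'
  have : Algebra.IsQuadraticExtension ℚ ℚ⟮s⟯ := isQuadraticExtension_adjoin_simple hs hirr
  refine exists_dickson_eval_eq_of_pow_add_inv_eq (x := x) hm ?_ ?_
  · rintro ⟨q, hq⟩
    have hq' : algebraMap ℚ E q = (T + algebraMap ℚ E c * s) / 2 := by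
      rw [← hx]
      exact congrArg Subtype.val hq
    refine hirr ⟨(2 * q - T) / c, ?_⟩
    have hc' : algebraMap ℚ E c ≠ 0 := by simpa using hc
    simp only [map_div₀, map_sub, map_mul, map_ofNat, map_intCast, hq']
    field_simp
    ring
  · have hmul : (x : E) ^ m * ((T - algebraMap ℚ E c * s) / 2) = 1 := by
      have hT' : (T : E) ^ 2 - algebraMap ℚ E c ^ 2 * s ^ 2 = 4 := by
        rw [hs]
        simpa using congrArg (algebraMap ℚ E) hT
      rw [hx]
      linear_combination hT' / 4
    apply Subtype.val_injective
    push_cast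
    rw [inv_eq_of_mul_eq_one_right hmul, hx]
    ring

end QuadraticExtension

theorem irrational_sqrt_prime_mul {p : ℕ} (hp : p.Prime) {d : ℤ} (hd : 0 ≤ d)
    (h : ¬ (p : ℤ) ∣ d) : Irrational √(p * d : ℝ) := by
  have hsq : ¬ IsSquare (p * d : ℤ) := by
    rintro ⟨r, hr⟩
    have hp' : Prime (p : ℤ) := Nat.prime_iff_prime_int.mp hp
    obtain ⟨k, rfl⟩ : (p : ℤ) ∣ r := or_self_iff.mp (hp'.dvd_or_dvd ⟨d, hr.symm⟩)
    exact h ⟨k * k, mul_left_cancel₀ hp'.ne_zero (by linear_combination hr)⟩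
  exact_mod_cast (irrational_sqrt_intCast_iff_of_nonneg (by positivity)).mpr hsq

section Congruence

/-- The largest prime factor of the Fibonacci number `F₁₂₅ = 5³ · 3001 · P`. -/
local notation "P" => 158414167964045700001

theorem prime_P : Nat.Prime P := by
  refine lucas_primality _ 34 (by reduce_mod_char) fun q hq hdvd ↦ ?_
  have hmem : q ∈ [2, 2, 2, 2, 2, 3, 3, 5, 5, 5, 5, 5, 7, 23, 233, 521, 3001, 3001] := by
    refine mem_list_primes_of_dvd_prod hq.prime ?_ (by simpa using hdvd)
    norm_num [← Nat.prime_iff]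
  fin_cases hmem <;> reduce_mod_char <;> decide

instance : Fact (Nat.Prime P) := ⟨prime_P⟩

theorem cast_fib_125_eq_zero : (Nat.fib 125 : ZMod P) = 0 := by
  rw [ZMod.natCast_eq_zero_iff]
  norm_num

-- `5185542819359498` is `2 * F₇₁ + 24 * F₇₀`, and the exponent below is `(P - 1) / 5`.
theorem dickson_five_eval_ne (t : ZMod P) :
    (dickson 1 1 5).eval t ≠ 5185542819359498 ∧ (dickson 1 1 5).eval t ≠ -5185542819359498 := by
  obtain ⟨y, hy⟩ : ∃ y : ZMod P, y = 117573452875126191891 := ⟨_, rfl⟩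
  have hinv : y⁻¹ = 40845900631738867608 := by
    rw [hy]; refine inv_eq_of_mul_eq_one_right ?_; reduce_mod_char
  have hne : y ≠ y⁻¹ := by rw [hinv, hy]; decide
  have hy0 : y ≠ 0 := by rintro rfl; simp at hne
  have hpow : y ^ 31682833592809140000 ≠ 1 := by rw [hy]; reduce_mod_char; decide
  have hsum : y + y⁻¹ = 5185542819359498 := by rw [hinv, hy]; reduce_mod_char
  constructor <;> intro h <;> refine hpow ?_
  · exact pow_eq_one_of_dickson_eval_eq (m := 5) (by simp [ZMod.card]) hy0 hne (h.trans hsum.symm)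
  · rw [← Even.neg_pow (by decide)]
    exact pow_eq_one_of_dickson_eval_eq (m := 5) (by simp [ZMod.card]) (neg_ne_zero.mpr hy0)
      (by simpa only [inv_neg, ne_eq, neg_inj] using hne) (by rw [h, inv_neg, ← neg_add, hsum])

theorem dickson_five_eval_ne_of_pell {α β : ℤ} (hα : 0 ≤ α) (hβ : 0 ≤ β)
    (hpell : α ^ 2 - 125 * β ^ 2 = 4) (hcong : 25 ∣ α + β) (t : ℤ) :
    (dickson 1 1 5).eval t ≠ α + 125 * β := by
  intro ht
  obtain ⟨k, hαk, hβk⟩ := exists_fib_of_sq_sub_five_mul_sq hα (y := 5 * β) (by lia) (by lia)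
  have hk : k % 125 = 35 := by
    refine mod_125_eq_of_five_mul_fib_eq ?_
    have : (125 : ℤ) ∣ 5 * Nat.fib (2 * k + 1) - 2 * Nat.fib (2 * k) := by lia
    simpa [sub_eq_zero] using (ZMod.intCast_zmod_eq_zero_iff_dvd _ 125).mpr this
  have htrace : (dickson 1 1 5).eval (t : ZMod P) =
      2 * Nat.fib (2 * k + 1) + 24 * Nat.fib (2 * k) := by
    refine (dickson_one_one_eval_map (Int.castRingHom (ZMod P)) 5 t).trans ?_
    have : α + 125 * β = 2 * Nat.fib (2 * k + 1) + 24 * Nat.fib (2 * k) := by lia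
    rw [ht, this]
    simp
  obtain ⟨h, h'⟩ | ⟨h, h'⟩ := cast_fib_two_mul_eq_mod_or_neg (by decide) cast_fib_125_eq_zero k
  · refine (dickson_five_eval_ne t).1 (htrace.trans ?_)
    rw [h, h', hk]
    norm_num
  · refine (dickson_five_eval_ne t).2 (htrace.trans ?_)
    rw [h, h', hk]
    norm_num

end Congruence

/-- For integers `α, β ≥ 2` with `α² − 125β² = 4` and `25 ∣ α + β`,
`d = (α+β)² − 4` and `ε₂ = (α + 125β + 5√(5d))/2`, the unit `ε₂` is not a fifth power
in the real quadratic field `k₂ = ℚ(√(5d)) ⊆ ℝ`. -/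
theorem stmt_14 (α β : ℤ) (hα : 2 ≤ α) (hβ : 2 ≤ β)
    (hpell : α ^ 2 - 125 * β ^ 2 = 4) (hcong : (25 : ℤ) ∣ (α + β))
    (d : ℤ) (hd : d = (α + β) ^ 2 - 4)
    (ε₂ : ℝ) (hε : ε₂ = ((α : ℝ) + 125 * (β : ℝ) + 5 * Real.sqrt (5 * (d : ℝ))) / 2) :
    ¬ ∃ x : IntermediateField.adjoin ℚ {Real.sqrt (5 * (d : ℝ))},
        (x : ℝ) ^ 5 = ε₂ := by
  rintro ⟨x, hx⟩
  have hd0 : 0 ≤ d := by nlinarith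
  have h5 : ¬ (5 : ℤ) ∣ d := by
    obtain ⟨l, hl⟩ := hcong
    have : d = 5 * (125 * l ^ 2) - 4 := by rw [hd, hl]; ring
    lia
  have hirr : Irrational √(5 * d) := by
    exact_mod_cast irrational_sqrt_prime_mul Nat.prime_five hd0 h5
  have hs : √(5 * d) ^ 2 = algebraMap ℚ ℝ (5 * d) := by
    rw [Real.sq_sqrt (by positivity)]
    simp
  have hnorm : ((α + 125 * β : ℤ) : ℚ) ^ 2 - 5 ^ 2 * (5 * d) = 4 := by
    have : (α + 125 * β) ^ 2 - 5 ^ 2 * (5 * d) = 4 := by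
      rw [hd]
      linear_combination -124 * hpell
    exact_mod_cast this
  obtain ⟨t, ht⟩ := exists_dickson_eval_eq_of_pow_eq hs hirr (by norm_num) hnorm (by decide : Odd 5)
    (hx.trans (by rw [hε]; simp))
  exact dickson_five_eval_ne_of_pell (by lia) (by lia) hpell hcong t ht
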